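/- Let F be a field of characteristic zero, A = F[x,y], n > 1, and d²(a,b) = y^{n-1}(∂a/∂x + y·∂b/∂y) − (n−1)·y^{n-1}·b. Then A decomposes as a direct sum A = Im(d²) ⊕ (⊕_{i=0}^{n-2} y^i F[x]); i.e., every f ∈ A with all y-degree components of degree ≥ n−1 is in the image of d², and Im(d²) meets the space of polynomials of y-degree ≤ n−2 only in 0. -/

import Mathlib

open MvPolynomial

noncomputable section

/-- `d²(a,b) = y^{n-1}(∂a/∂x + y·∂b/∂y) − (n−1)·y^{n-1}·b`. -/
def d2 (F : Type*) [Field F] (n : ℕ)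
    (p : MvPolynomial (Fin 2) F × MvPolynomial (Fin 2) F) : MvPolynomial (Fin 2) F :=
  X 1 ^ (n - 1) * (pderiv 0 p.1 + X 1 * pderiv 1 p.2) - C ((n : F) - 1) * X 1 ^ (n - 1) * p.2

/-!
Every value of `d²` is divisible by `y^{n-1}`. Conversely, as `∂/∂x` is surjective in
characteristic zero, `d²(a, 0) = y^{n-1} ∂a/∂x` already takes every multiple of `y^{n-1}` as a
value. So `Im(d²)` is the ideal generated by `y^{n-1}`, and the decomposition is division with
remainder by `y^{n-1}`.
-/

section CommSemiring

variable {σ R : Type*} [CommSemiring R]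

theorem pderiv_surjective [Algebra ℚ≥0 R] (i : σ) :
    Function.Surjective (pderiv i : MvPolynomial σ R → MvPolynomial σ R) := by
  intro f
  induction f using MvPolynomial.induction_on' with
  | monomial m r =>
    have hm : (m i + 1 : ℚ≥0) ≠ 0 := by positivity
    have hr : ((m i + 1 : ℚ≥0)⁻¹ • r) * (m i + 1 : R) = r := by
      have hcast : (m i + 1 : R) = algebraMap ℚ≥0 R (m i + 1) := by simp
      rw [hcast, mul_comm, ← Algebra.smul_def, smul_inv_smul₀ hm]
    refine ⟨monomial (m + Finsupp.single i 1) ((m i + 1 : ℚ≥0)⁻¹ • r), ?_⟩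
    rw [pderiv_monomial, add_tsub_cancel_right, Finsupp.add_apply, Finsupp.single_eq_same,
      Nat.cast_add_one, hr]
  | add p q hp hq =>
    obtain ⟨a, rfl⟩ := hp
    obtain ⟨b, rfl⟩ := hq
    exact ⟨a + b, map_add _ a b⟩

theorem X_pow_dvd_iff {i : σ} {k : ℕ} {f : MvPolynomial σ R} :
    X i ^ k ∣ f ↔ ∀ m ∈ f.support, k ≤ m i := by
  rw [X_pow_eq_monomial, monomial_one_dvd_iff_modMonomial_eq_zero]
  simp only [← Finsupp.single_le_iff]
  constructor
  · intro hmod m hm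
    by_contra hle
    apply mem_support_iff.mp hm
    rw [← coeff_modMonomial_of_not_le f hle, hmod, coeff_zero]
  · intro hf
    ext m
    by_cases hle : Finsupp.single i k ≤ m
    · rw [coeff_modMonomial_of_le f hle, coeff_zero]
    · rw [coeff_modMonomial_of_not_le f hle, coeff_zero]
      exact notMem_support_iff.mp (mt (hf m) hle)

theorem eq_zero_of_X_pow_dvd_of_degreeOf_lt {i : σ} {k : ℕ} {f : MvPolynomial σ R}
    (hdvd : X i ^ k ∣ f) (hdeg : degreeOf i f < k) : f = 0 := by
  by_contra hf
  obtain ⟨m, hm⟩ := support_nonempty.mpr hf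
  exact (X_pow_dvd_iff.mp hdvd m hm).not_gt ((monomial_le_degreeOf i hm).trans_lt hdeg)

theorem degreeOf_modMonomial_single_lt {k : ℕ} (hk : 0 < k) (i : σ) (f : MvPolynomial σ R) :
    degreeOf i (f.modMonomial (Finsupp.single i k)) < k := by
  rw [degreeOf_lt_iff hk]
  intro m hm
  by_contra! hle
  exact mem_support_iff.mp hm (coeff_modMonomial_of_le f (Finsupp.single_le_iff.mpr hle))

end CommSemiring

theorem existsUnique_degreeOf_lt_and_X_pow_dvd_sub {σ R : Type*} [CommRing R] {k : ℕ}
    (hk : 0 < k) (i : σ) (f : MvPolynomial σ R) :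
    ∃! g, degreeOf i g < k ∧ X i ^ k ∣ f - g := by
  set r := f.modMonomial (Finsupp.single i k)
  have hr_deg : degreeOf i r < k := degreeOf_modMonomial_single_lt hk i f
  have hr_dvd : X i ^ k ∣ f - r := by
    rw [X_pow_eq_monomial]
    exact ⟨_, sub_eq_iff_eq_add.mpr (divMonomial_add_modMonomial f _).symm⟩
  refine ⟨r, ⟨hr_deg, hr_dvd⟩, fun g ⟨hg_deg, hg_dvd⟩ ↦ sub_eq_zero.mp ?_⟩
  apply eq_zero_of_X_pow_dvd_of_degreeOf_lt (i := i) (k := k)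
  · simpa only [sub_sub_sub_cancel_left] using dvd_sub hr_dvd hg_dvd
  · exact (degreeOf_sub_le i g r).trans_lt (max_lt hg_deg hr_deg)

theorem exists_d2_eq_iff {F : Type*} [Field F] [CharZero F] {n : ℕ}
    {f : MvPolynomial (Fin 2) F} : (∃ p, d2 F n p = f) ↔ X 1 ^ (n - 1) ∣ f := by
  constructor
  · rintro ⟨⟨a, b⟩, rfl⟩
    exact ⟨pderiv 0 a + X 1 * pderiv 1 b - C ((n : F) - 1) * b, by rw [d2]; ring⟩
  · rintro ⟨q, rfl⟩
    obtain ⟨a, rfl⟩ := pderiv_surjective 0 q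
    exact ⟨(a, 0), by simp [d2]⟩

/-- `A = Im(d²) ⊕ (⊕_{i=0}^{n-2} y^i F[x])`: every `f` is uniquely the sum of an element
of the image of `d²` and a polynomial of `y`-degree at most `n−2`; every `f` all of whose
monomials have `y`-degree ≥ `n−1` is in the image of `d²`; and the image of `d²` meets the
polynomials of `y`-degree at most `n−2` only in `0`. -/
theorem stmt8 (F : Type*) [Field F] [CharZero F] (n : ℕ) (hn : 1 < n) :
    (∀ f : MvPolynomial (Fin 2) F,
        ∃! g : MvPolynomial (Fin 2) F, degreeOf 1 g ≤ n - 2 ∧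
          ∃ p : MvPolynomial (Fin 2) F × MvPolynomial (Fin 2) F, f = d2 F n p + g) ∧
    (∀ f : MvPolynomial (Fin 2) F, (∀ m ∈ f.support, n - 1 ≤ m 1) →
        ∃ p : MvPolynomial (Fin 2) F × MvPolynomial (Fin 2) F, d2 F n p = f) ∧
    (∀ p : MvPolynomial (Fin 2) F × MvPolynomial (Fin 2) F,
        degreeOf 1 (d2 F n p) ≤ n - 2 → d2 F n p = 0) := by
  have hdeg (g : MvPolynomial (Fin 2) F) : degreeOf 1 g ≤ n - 2 ↔ degreeOf 1 g < n - 1 := by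
    omega
  refine ⟨fun f ↦ ?_, fun f hf ↦ ?_, fun p hp ↦ ?_⟩
  · have hsum (g : MvPolynomial (Fin 2) F) :
        (∃ p, f = d2 F n p + g) ↔ X 1 ^ (n - 1) ∣ f - g := by
      simp only [← exists_d2_eq_iff, eq_sub_iff_add_eq, eq_comm]
    simpa only [hdeg, hsum] using existsUnique_degreeOf_lt_and_X_pow_dvd_sub (by omega) 1 f
  · exact exists_d2_eq_iff.mpr (X_pow_dvd_iff.mpr hf)
  · exact eq_zero_of_X_pow_dvd_of_degreeOf_lt (exists_d2_eq_iff.mp ⟨p, rfl⟩) ((hdeg _).mp hp)
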